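/- Suppose 𝒴 = span(ℝ^N_0, Y_1,…,Y_R) is a finite-dimensional vector subspace of L^0(Ω,𝐅_T,P) with ℝ^N_0 ⊆ 𝒴, and NCA(𝒴) holds. Then K^𝒴 is closed under componentwise P-a.s. convergence of sequences: if f_n ∈ K^𝒴 and f_n → f P-a.s. in every component, then f ∈ K^𝒴. -/

import Mathlib

open MeasureTheory Filter Topology

namespace CollectiveArb

variable {Ω : Type*}

/-- Terminal gains `K_i` of admissible (predictable) strategies for an agent with
filtration `F`, trading the assets indexed by `A`, over times `1,…,T`. -/
def gainsSet {J : ℕ} (F : ℕ → MeasurableSpace Ω) (T : ℕ)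
    (A : Finset (Fin J)) (X : Fin J → ℕ → Ω → ℝ) : Set (Ω → ℝ) :=
  { g | ∃ H : Fin J → ℕ → Ω → ℝ,
      (∀ j ∈ A, ∀ s, 1 ≤ s → s ≤ T → Measurable[F (s - 1)] (H j s)) ∧
      g = fun ω => ∑ j ∈ A, ∑ s ∈ Finset.Icc 1 T, H j s ω * (X j s ω - X j (s - 1) ω) }

/-- No collective arbitrage for the gains sets `K` and the exchange set `Y`:
`(K₁ × ⋯ × K_N + Y) ∩ L⁰₊ = {0}`. -/
def NCA {N : ℕ} [MeasurableSpace Ω] (P : Measure Ω)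
    (K : Fin N → Set (Ω → ℝ)) (Y : Set (Fin N → Ω → ℝ)) : Prop :=
  ∀ k : Fin N → Ω → ℝ, ∀ y ∈ Y, (∀ i, k i ∈ K i) →
    (∀ i, ∀ᵐ ω ∂P, 0 ≤ k i ω + y i ω) →
    ∀ i, (fun ω => k i ω + y i ω) =ᵐ[P] fun _ => (0 : ℝ)

/-- `K^𝒴 = ⨉ᵢ (Kᵢ − L⁰₊(ℱᵢ_T)) + 𝒴`. -/
def KY {N : ℕ} [MeasurableSpace Ω] (P : Measure Ω)
    (FT : Fin N → MeasurableSpace Ω)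
    (K : Fin N → Set (Ω → ℝ)) (Y : Set (Fin N → Ω → ℝ)) : Set (Fin N → Ω → ℝ) :=
  { f | ∃ (k l y : Fin N → Ω → ℝ), y ∈ Y ∧ (∀ i, k i ∈ K i) ∧
      (∀ i, Measurable[FT i] (l i) ∧ (∀ᵐ ω ∂P, 0 ≤ l i ω)) ∧
      ∀ i, f i = fun ω => k i ω - l i ω + y i ω }

/-- `ℝ^N_0`: zero-sum deterministic exchanges, viewed as constant random vectors. -/
def zeroSum (Ω : Type*) (N : ℕ) : Set (Fin N → Ω → ℝ) :=
  { y | ∃ x : Fin N → ℝ, (∑ i, x i) = 0 ∧ ∀ i, y i = fun _ => x i }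

/-- `span(ℝ^N_0, Y_1, …, Y_R)`: the finite-dimensional space of exchanges generated
by `ℝ^N_0` and the random vectors `Ys 1, …, Ys R`. -/
def spanExch {N R : ℕ} (Ys : Fin R → Fin N → Ω → ℝ) : Set (Fin N → Ω → ℝ) :=
  { y | ∃ (x : Fin N → ℝ) (c : Fin R → ℝ), (∑ i, x i) = 0 ∧
      ∀ i, y i = fun ω => x i + ∑ r, c r * Ys r i ω }

/-- `span(𝒴₀ ∪ {g})` for a vector subspace `𝒴₀`. -/
def spanWith {N : ℕ} (Y0 : Set (Fin N → Ω → ℝ)) (g : Fin N → Ω → ℝ) :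
    Set (Fin N → Ω → ℝ) :=
  { y | ∃ w ∈ Y0, ∃ c : ℝ, ∀ i, y i = fun ω => w i ω + c * g i ω }

/-- Equivalent martingale measures `Mᵢₑ` for the assets in `A`, w.r.t. the filtration `F`. -/
def martMeasures {J : ℕ} [MeasurableSpace Ω] (P : Measure Ω)
    (F : ℕ → MeasurableSpace Ω) (T : ℕ) (A : Finset (Fin J))
    (X : Fin J → ℕ → Ω → ℝ) : Set (Measure Ω) :=
  { Q | IsProbabilityMeasure Q ∧ Q ≪ P ∧ P ≪ Q ∧
      ∀ j ∈ A, (∀ t, t ≤ T → Integrable (X j t) Q) ∧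
        ∀ s t, s ≤ t → t ≤ T → X j s =ᵐ[Q] Q[X j t | F s] }

/-- Equivalent collective martingale measures `ℳₑ(𝒴)`. -/
def MeY {J N : ℕ} [MeasurableSpace Ω] (P : Measure Ω)
    (F : Fin N → ℕ → MeasurableSpace Ω) (T : ℕ) (assets : Fin N → Finset (Fin J))
    (X : Fin J → ℕ → Ω → ℝ) (Y : Set (Fin N → Ω → ℝ)) : Set (Fin N → Measure Ω) :=
  { Q | (∀ i, Q i ∈ martMeasures P (F i) T (assets i) X) ∧
      (∀ y ∈ Y, ∀ i, Integrable (y i) (Q i)) ∧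
      ∀ y ∈ Y, (∑ i, ∫ ω, y i ω ∂(Q i)) ≤ 0 }

/-- `ℳ^φ_e(𝒴) = {Q ∈ ℳₑ(𝒴) : E_{Qⁱ}[|φⁱ|] < ∞ ∀ i}`. -/
def MeYphi {J N : ℕ} [MeasurableSpace Ω] (P : Measure Ω)
    (F : Fin N → ℕ → MeasurableSpace Ω) (T : ℕ) (assets : Fin N → Finset (Fin J))
    (X : Fin J → ℕ → Ω → ℝ) (Y : Set (Fin N → Ω → ℝ))
    (φ : Fin N → Ω → ℝ) : Set (Fin N → Measure Ω) :=
  { Q | Q ∈ MeY P F T assets X Y ∧ ∀ i, Integrable (φ i) (Q i) }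

/-- Closedness of a set of random vectors under componentwise `P`-a.s. convergence
of sequences (within `L⁰(Ω, 𝐅_T, P)`). -/
def ClosedAS {N : ℕ} [MeasurableSpace Ω] (P : Measure Ω)
    (FT : Fin N → MeasurableSpace Ω) (S : Set (Fin N → Ω → ℝ)) : Prop :=
  ∀ (f : ℕ → Fin N → Ω → ℝ) (g : Fin N → Ω → ℝ),
    (∀ n, f n ∈ S) → (∀ i, Measurable[FT i] (g i)) →
    (∀ i, ∀ᵐ ω ∂P, Tendsto (fun n => f n i ω) atTop (𝓝 (g i ω))) →
    g ∈ S

/-- Collective superhedging price `ρ^𝒴₊(f)` (with `inf ∅ = +∞`). -/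
noncomputable def rhoPlus {N : ℕ} [MeasurableSpace Ω] (P : Measure Ω)
    (K : Fin N → Set (Ω → ℝ)) (Y : Set (Fin N → Ω → ℝ))
    (f : Fin N → Ω → ℝ) : EReal :=
  sInf { z : EReal | ∃ m : Fin N → ℝ, z = ((∑ i, m i : ℝ) : EReal) ∧
      ∃ k : Fin N → Ω → ℝ, (∀ i, k i ∈ K i) ∧ ∃ y ∈ Y,
        ∀ i, ∀ᵐ ω ∂P, f i ω ≤ m i + k i ω + y i ω }

/-- Collective subhedging price `ρ^𝒴₋(f)` (with `sup ∅ = −∞`). -/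
noncomputable def rhoMinus {N : ℕ} [MeasurableSpace Ω] (P : Measure Ω)
    (K : Fin N → Set (Ω → ℝ)) (Y : Set (Fin N → Ω → ℝ))
    (f : Fin N → Ω → ℝ) : EReal :=
  sSup { z : EReal | ∃ m : Fin N → ℝ, z = ((∑ i, m i : ℝ) : EReal) ∧
      ∃ k : Fin N → Ω → ℝ, (∀ i, k i ∈ K i) ∧ ∃ y ∈ Y,
        ∀ i, ∀ᵐ ω ∂P, m i + k i ω - y i ω ≤ f i ω }

/-- `ρ^𝒴₊(f)` is attained. -/
def rhoPlusAttained {N : ℕ} [MeasurableSpace Ω] (P : Measure Ω)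
    (K : Fin N → Set (Ω → ℝ)) (Y : Set (Fin N → Ω → ℝ))
    (f : Fin N → Ω → ℝ) : Prop :=
  ∃ (m : Fin N → ℝ) (k y : Fin N → Ω → ℝ), y ∈ Y ∧ (∀ i, k i ∈ K i) ∧
    (∀ i, ∀ᵐ ω ∂P, f i ω ≤ m i + k i ω + y i ω) ∧
    rhoPlus P K Y f = ((∑ i, m i : ℝ) : EReal)

/-- `ρ^𝒴₋(f)` is attained. -/
def rhoMinusAttained {N : ℕ} [MeasurableSpace Ω] (P : Measure Ω)
    (K : Fin N → Set (Ω → ℝ)) (Y : Set (Fin N → Ω → ℝ))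
    (f : Fin N → Ω → ℝ) : Prop :=
  ∃ (m : Fin N → ℝ) (k y : Fin N → Ω → ℝ), y ∈ Y ∧ (∀ i, k i ∈ K i) ∧
    (∀ i, ∀ᵐ ω ∂P, m i + k i ω - y i ω ≤ f i ω) ∧
    rhoMinus P K Y f = ((∑ i, m i : ℝ) : EReal)

/-- `f` is `𝒴`-collectively replicable: `f ∈ ℝ^N + (K₁ × ⋯ × K_N) + 𝒴` in `L⁰`. -/
def Replicable {N : ℕ} [MeasurableSpace Ω] (P : Measure Ω)
    (K : Fin N → Set (Ω → ℝ)) (Y : Set (Fin N → Ω → ℝ))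
    (f : Fin N → Ω → ℝ) : Prop :=
  ∃ (m : Fin N → ℝ) (k y : Fin N → Ω → ℝ), y ∈ Y ∧ (∀ i, k i ∈ K i) ∧
    ∀ i, f i =ᵐ[P] fun ω => m i + k i ω + y i ω

/-!
A space of gains is a sum of spaces of multiples `a * ξ` of a single claim `ξ`, with coefficient `a`
measurable for some information `G`. Adjoining such multiples to a space `D` stable under `G`
preserves the closedness of `D - L⁰₊`, as long as there is no arbitrage: on the event where the
coefficients in `f n ≤ h n * ξ + d n` explode, dividing by them and passing to the limit shows that
`ξ` is there an element of `D`, hence redundant; elsewhere a measurably chosen subsequence of the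
coefficients converges. Adding price increments from the last to the first proves closedness for
each agent. A tuple of claims is a function of agent and scenario, so that adjoining exchanges is
the same step with constant coefficients: every space is stable under the trivial `G`.
-/

section RandomSubsequences

variable {α : Type*} {G : MeasurableSpace α}

/-- A `G`-measurably parametrised subsequence: `τ k ω` is the `k`-th index chosen at `ω`. Only
`τ k ω → ∞` is required, not strict monotonicity in `k`. -/
structure IsRandomSubsequence (G : MeasurableSpace α) (τ : ℕ → α → ℕ) : Prop where
  measurable : ∀ k, Measurable[G] (τ k)
  tendsto : ∀ ω, Tendsto (fun k ↦ τ k ω) atTop atTop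

theorem exists_isRandomSubsequence {p : ℕ → ℕ → α → Prop}
    (hp : ∀ k n, MeasurableSet {ω | p k n ω}) (hfreq : ∀ k ω, ∃ᶠ n in atTop, p k n ω) :
    ∃ τ, IsRandomSubsequence G τ ∧ ∀ k ω, p k (τ k ω) ω := by
  classical
  have hex k ω : ∃ n ≥ k, p k n ω := frequently_atTop.1 (hfreq k ω) k
  refine ⟨fun k ω ↦ Nat.find (hex k ω), ⟨fun k ↦ ?_, fun ω ↦ ?_⟩,
    fun k ω ↦ (Nat.find_spec (hex k ω)).2⟩
  · exact measurable_find (hex k) fun n ↦ (MeasurableSet.const _).inter (hp k n)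
  · exact tendsto_atTop_mono (fun k ↦ (Nat.find_spec (hex k ω)).1) tendsto_id

theorem exists_randomSubsequence_tendsto {h : ℕ → α → ℝ} (hh : ∀ n, Measurable (h n))
    (hbdd : ∀ ω, Bornology.IsBounded (Set.range fun n ↦ h n ω)) :
    ∃ τ a, IsRandomSubsequence G τ ∧ Measurable a ∧
      ∀ ω, Tendsto (fun k ↦ h (τ k ω) ω) atTop (𝓝 (a ω)) := by
  set a : α → ℝ := fun ω ↦ limsup (fun n ↦ h n ω) atTop
  have ham : Measurable a := .limsup hh
  have hcluster ω : MapClusterPt (a ω) atTop fun n ↦ h n ω :=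
    have hω := isBounded_iff_bddBelow_bddAbove.1 (hbdd ω)
    .limsup hω.1.isBoundedUnder_of_range.isCoboundedUnder_le hω.2.isBoundedUnder_of_range
  obtain ⟨τ, hτ, hdist⟩ := exists_isRandomSubsequence
    (p := fun k n ω ↦ dist (h n ω) (a ω) < 1 / ((k : ℝ) + 1))
    (fun k n ↦ measurableSet_lt ((hh n).dist ham) measurable_const)
    (fun k ω ↦ (hcluster ω).frequently (Metric.ball_mem_nhds _ Nat.one_div_pos_of_nat))
  exact ⟨τ, a, hτ, ham, fun ω ↦ tendsto_iff_dist_tendsto_zero.2 <| squeeze_zero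
    (fun _ ↦ dist_nonneg) (fun k ↦ (hdist k ω).le) tendsto_one_div_add_atTop_nhds_zero_nat⟩

theorem exists_randomSubsequence_lt {h : ℕ → α → ℝ} (hh : ∀ n, Measurable (h n)) :
    ∃ τ, IsRandomSubsequence G τ ∧
      ∀ (k : ℕ) ω, ¬BddAbove (Set.range fun n ↦ h n ω) → (k : ℝ) < h (τ k ω) ω := by
  refine exists_isRandomSubsequence
    (p := fun k n ω ↦ ¬BddAbove (Set.range fun n ↦ h n ω) → (k : ℝ) < h n ω)
    (fun k n ↦ ?_) (fun k ω ↦ ?_)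
  · exact (measurableSet_bddAbove_range hh).compl.imp (measurableSet_lt measurable_const (hh n))
  · by_contra hcon
    simp only [not_frequently, Classical.not_imp, not_lt] at hcon
    obtain ⟨n, hn, -⟩ := hcon.exists
    exact hn (IsBoundedUnder.bddAbove_range ⟨k, eventually_map.2 (hcon.mono fun _ h ↦ h.2)⟩)

end RandomSubsequences

section StableSubmodules

variable {α : Type*} {G G' : MeasurableSpace α} {D E : Submodule ℝ (α → ℝ)} {ξ : α → ℝ}

/-- A space of random variables that behaves like a closed `L⁰(G)`-module: it is stable under
multiplication by `G`-measurable coefficients and under countable `G`-measurable concatenations. -/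
structure IsStable (G : MeasurableSpace α) (D : Submodule ℝ (α → ℝ)) : Prop where
  mul_mem : ∀ {a}, Measurable[G] a → ∀ {d}, d ∈ D → a * d ∈ D
  select_mem : ∀ {d : ℕ → α → ℝ}, (∀ n, d n ∈ D) → ∀ {τ : α → ℕ}, Measurable[G] τ →
    (fun ω ↦ d (τ ω) ω) ∈ D

/-- The multiples `a * ξ` of `ξ` with `G`-measurable coefficient `a`: the gains available from a
single price increment `ξ` to an agent whose information is `G`. -/
def measurableMultiples (G : MeasurableSpace α) (ξ : α → ℝ) : Submodule ℝ (α → ℝ) where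
  carrier := {f | ∃ a, Measurable[G] a ∧ a * ξ = f}
  zero_mem' := ⟨0, measurable_const, zero_mul ξ⟩
  add_mem' := by
    rintro _ _ ⟨a, ha, rfl⟩ ⟨b, hb, rfl⟩
    exact ⟨a + b, ha.add hb, add_mul a b ξ⟩
  smul_mem' := by
    rintro c _ ⟨a, ha, rfl⟩
    exact ⟨c • a, ha.const_smul c, smul_mul_assoc c a ξ⟩

theorem mem_measurableMultiples {f : α → ℝ} :
    f ∈ measurableMultiples G ξ ↔ ∃ a, Measurable[G] a ∧ a * ξ = f :=
  Iff.rfl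

theorem mem_sup_measurableMultiples {f : α → ℝ} :
    f ∈ D ⊔ measurableMultiples G ξ ↔ ∃ a, Measurable[G] a ∧ ∃ d ∈ D, a * ξ + d = f := by
  simp only [Submodule.mem_sup, mem_measurableMultiples]
  constructor
  · rintro ⟨d, hd, _, ⟨a, ha, rfl⟩, rfl⟩
    exact ⟨a, ha, d, hd, add_comm _ _⟩
  · rintro ⟨a, ha, d, hd, rfl⟩
    exact ⟨d, hd, _, ⟨a, ha, rfl⟩, add_comm _ _⟩

theorem measurableMultiples_neg (G : MeasurableSpace α) (ξ : α → ℝ) :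
    measurableMultiples G (-ξ) = measurableMultiples G ξ := by
  have hle (η : α → ℝ) : measurableMultiples G (-η) ≤ measurableMultiples G η := by
    rintro _ ⟨a, ha, rfl⟩
    exact ⟨-a, ha.neg, by rw [neg_mul, mul_neg]⟩
  exact le_antisymm (hle ξ) (by simpa using hle (-ξ))

theorem measurableMultiples_bot (ξ : α → ℝ) :
    measurableMultiples ⊥ ξ = Submodule.span ℝ {ξ} := by
  ext f
  rw [mem_measurableMultiples, Submodule.mem_span_singleton]
  constructor
  · rintro ⟨a, ha, rfl⟩
    obtain ⟨c, rfl⟩ := eq_const_of_measurable_bot ha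
    exact ⟨c, rfl⟩
  · rintro ⟨c, rfl⟩
    exact ⟨fun _ ↦ c, measurable_const, rfl⟩

theorem measurable_select {ι β : Type*} [Countable ι] [MeasurableSpace ι]
    [MeasurableSingletonClass ι] [MeasurableSpace β] {h : ι → α → β}
    (hh : ∀ i, Measurable[G] (h i)) {τ : α → ι} (hτ : Measurable[G] τ) :
    Measurable[G] fun ω ↦ h (τ ω) ω :=
  (measurable_from_prod_countable_left (f := fun p : α × ι ↦ h p.2 p.1) hh).comp
    (measurable_id.prodMk hτ)

theorem indicator_one_mul {R : Type*} [MulZeroOneClass R] (A : Set α) (d : α → R) :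
    A.indicator 1 * d = A.indicator d := by
  ext ω
  simp [← Set.indicator_mul_left]

namespace IsStable

theorem indicator_mem (hD : IsStable G D) {A : Set α} (hA : MeasurableSet[G] A) {d : α → ℝ}
    (hd : d ∈ D) : A.indicator d ∈ D := by
  rw [← indicator_one_mul]
  exact hD.mul_mem (measurable_one.indicator hA) hd

theorem bot (G : MeasurableSpace α) : IsStable G (⊥ : Submodule ℝ (α → ℝ)) where
  mul_mem := by
    rintro a - d rfl
    exact mul_zero a
  select_mem hd _ _ := funext fun ω ↦ congrFun ((Submodule.mem_bot ℝ).1 (hd _)) ω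

theorem of_bot (D : Submodule ℝ (α → ℝ)) : IsStable ⊥ D where
  mul_mem ha d hd := by
    obtain ⟨c, rfl⟩ := eq_const_of_measurable_bot ha
    exact D.smul_mem c hd
  select_mem hd τ hτ := by
    obtain ⟨n, rfl⟩ := eq_const_of_measurable_bot hτ
    exact hd n

theorem measurableMultiples (hG : G' ≤ G) (ξ : α → ℝ) :
    IsStable G' (measurableMultiples G ξ) where
  mul_mem := by
    rintro b hb _ ⟨a, ha, rfl⟩
    exact ⟨b * a, (hb.mono hG le_rfl).mul ha, mul_assoc b a ξ⟩
  select_mem hd τ hτ := by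
    choose a ha haξ using hd
    exact ⟨fun ω ↦ a (τ ω) ω, measurable_select ha (hτ.mono hG le_rfl),
      funext fun ω ↦ congrFun (haξ (τ ω)) ω⟩

theorem sup (hD : IsStable G D) (hE : IsStable G E) : IsStable G (D ⊔ E) where
  mul_mem {a} ha f hf := by
    obtain ⟨d, hd, e, he, rfl⟩ := Submodule.mem_sup.1 hf
    rw [mul_add]
    exact Submodule.add_mem_sup (hD.mul_mem ha hd) (hE.mul_mem ha he)
  select_mem hf τ hτ := by
    choose d hd e he hde using fun n ↦ Submodule.mem_sup.1 (hf n)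
    refine Submodule.mem_sup.2 ⟨_, hD.select_mem hd hτ, _, hE.select_mem he hτ, ?_⟩
    exact funext fun ω ↦ congrFun (hde (τ ω)) ω

theorem biSup {ι : Type*} {S : Finset ι} {D : ι → Submodule ℝ (α → ℝ)}
    (hD : ∀ k ∈ S, IsStable G (D k)) : IsStable G (⨆ k ∈ S, D k) := by
  classical
  induction S using Finset.induction_on with
  | empty => simpa using IsStable.bot G
  | insert i S _ ih =>
    rw [Finset.iSup_insert]
    exact (hD i (Finset.mem_insert_self i S)).sup
      (ih fun k hk ↦ hD k (Finset.mem_insert_of_mem hk))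

end IsStable

end StableSubmodules

section DominatedClosed

variable {α : Type*} {G : MeasurableSpace α} {l : Filter α} {D : Submodule ℝ (α → ℝ)}
  {ξ g : α → ℝ} {f h d : ℕ → α → ℝ}

/-- No arbitrage: an element of `D` that is almost everywhere nonnegative vanishes almost
everywhere. "Almost everywhere" is taken along an arbitrary filter `l`, which is `ae P` for a
single agent. -/
def NoArbitrage (l : Filter α) (D : Submodule ℝ (α → ℝ)) : Prop :=
  ∀ d ∈ D, 0 ≤ᶠ[l] d → d =ᶠ[l] 0

/-- Closedness of `D - L⁰₊` under almost everywhere convergence of sequences. Membership in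
`D - L⁰₊` is expressed as domination by an element of `D`, without measurability. -/
def IsDominatedClosed (l : Filter α) (D : Submodule ℝ (α → ℝ)) : Prop :=
  ∀ (f : ℕ → α → ℝ) (g : α → ℝ), (∀ n, ∃ d ∈ D, f n ≤ᶠ[l] d) →
    (∀ᶠ ω in l, Tendsto (fun n ↦ f n ω) atTop (𝓝 (g ω))) → ∃ d ∈ D, g ≤ᶠ[l] d

theorem NoArbitrage.mono {E : Submodule ℝ (α → ℝ)} (hE : NoArbitrage l E) (hDE : D ≤ E) :
    NoArbitrage l D :=
  fun d hd ↦ hE d (hDE hd)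

theorem isDominatedClosed_bot [CountableInterFilter l] :
    IsDominatedClosed l (⊥ : Submodule ℝ (α → ℝ)) := by
  intro f g hf hfg
  simp only [Submodule.mem_bot, exists_eq_left] at hf ⊢
  filter_upwards [hfg, eventually_countable_forall.2 hf] with ω hω h0
  exact le_of_tendsto' hω h0

namespace IsDominatedClosed

variable [CountableInterFilter l]

theorem exists_mul_le (hcl : IsDominatedClosed l D) (hD : IsStable G D) (hd : ∀ n, d n ∈ D)
    (hf : ∀ n, f n ≤ᶠ[l] h n * ξ + d n)
    (hfg : ∀ᶠ ω in l, Tendsto (fun n ↦ f n ω) atTop (𝓝 (g ω)))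
    {τ : ℕ → α → ℕ} (hτ : IsRandomSubsequence G τ)
    {b : ℕ → α → ℝ} {b' a : α → ℝ} (hb : ∀ k, Measurable[G] (b k)) (hb_nonneg : ∀ k, 0 ≤ b k)
    (hb_tendsto : ∀ ω, Tendsto (fun k ↦ b k ω) atTop (𝓝 (b' ω)))
    (hbh_tendsto : ∀ ω, Tendsto (fun k ↦ b k ω * h (τ k ω) ω) atTop (𝓝 (a ω))) :
    ∃ e ∈ D, b' * g ≤ᶠ[l] a * ξ + e := by
  obtain ⟨e, he, hle⟩ := hcl
    (fun k ω ↦ b k ω * f (τ k ω) ω - b k ω * h (τ k ω) ω * ξ ω) (b' * g - a * ξ)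
    (fun k ↦ ⟨_, hD.mul_mem (hb k) (hD.select_mem hd (hτ.measurable k)), by
      filter_upwards [eventually_countable_forall.2 hf] with ω hω
      have := mul_le_mul_of_nonneg_left (hω (τ k ω)) (hb_nonneg k ω)
      simp only [Pi.add_apply, Pi.mul_apply] at this ⊢
      linarith⟩)
    (by
      filter_upwards [hfg] with ω hω
      exact ((hb_tendsto ω).mul (hω.comp (hτ.tendsto ω))).sub ((hbh_tendsto ω).mul_const _))
  refine ⟨e, he, hle.mono fun ω hω ↦ ?_⟩
  simp only [Pi.sub_apply, Pi.add_apply] at hω ⊢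
  linarith

/-- Dividing `f n ≤ h n * ξ + d n` by the exploding coefficients gives `0 ≤ ξ + e` in the limit, for
some `e ∈ D`, and no arbitrage turns this into an equality. -/
theorem exists_indicator_not_bddAbove_eq (hcl : IsDominatedClosed l D) (hD : IsStable G D)
    (hNA : NoArbitrage l (D ⊔ measurableMultiples G ξ))
    (hh : ∀ n, Measurable[G] (h n)) (hd : ∀ n, d n ∈ D) (hf : ∀ n, f n ≤ᶠ[l] h n * ξ + d n)
    (hfg : ∀ᶠ ω in l, Tendsto (fun n ↦ f n ω) atTop (𝓝 (g ω))) :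
    ∃ e ∈ D, {ω | ¬BddAbove (Set.range fun n ↦ h n ω)}.indicator ξ =ᶠ[l] e := by
  set U : Set α := {ω | ¬BddAbove (Set.range fun n ↦ h n ω)}
  have hU : MeasurableSet[G] U := (measurableSet_bddAbove_range hh).compl
  obtain ⟨τ, hτ, hlt⟩ := exists_randomSubsequence_lt hh
  have hpos k {ω} (hω : ω ∈ U) : 0 < h (τ k ω) ω := k.cast_nonneg.trans_lt (hlt k ω hω)
  obtain ⟨e, he, hle⟩ := hcl.exists_mul_le hD hd hf hfg hτ (b' := 0) (a := U.indicator 1)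
    (b := fun k ↦ U.indicator fun ω ↦ (h (τ k ω) ω)⁻¹)
    (fun k ↦ (measurable_select hh (hτ.measurable k)).inv.indicator hU)
    (fun k ↦ Set.indicator_nonneg fun ω hω ↦ (inv_pos.2 (hpos k hω)).le)
    (fun ω ↦ by
      by_cases hω : ω ∈ U
      · simpa [hω, Function.comp_def] using tendsto_inv_atTop_zero.comp
          (tendsto_atTop_mono (fun k ↦ (hlt k ω hω).le) tendsto_natCast_atTop_atTop)
      · simp [hω])
    (fun ω ↦ by
      by_cases hω : ω ∈ U
      · simp [hω, (hpos _ hω).ne']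
      · simp [hω])
  have hzero : U.indicator 1 * ξ + e =ᶠ[l] 0 :=
    hNA _ (mem_sup_measurableMultiples.2 ⟨_, measurable_one.indicator hU, e, he, rfl⟩)
      (by simpa using hle)
  rw [indicator_one_mul] at hzero
  exact ⟨-e, D.neg_mem he, hzero.mono fun ω hω ↦ eq_neg_of_add_eq_zero_left hω⟩

theorem exists_indicator_not_isBounded_eq (hcl : IsDominatedClosed l D) (hD : IsStable G D)
    (hNA : NoArbitrage l (D ⊔ measurableMultiples G ξ))
    (hh : ∀ n, Measurable[G] (h n)) (hd : ∀ n, d n ∈ D) (hf : ∀ n, f n ≤ᶠ[l] h n * ξ + d n)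
    (hfg : ∀ᶠ ω in l, Tendsto (fun n ↦ f n ω) atTop (𝓝 (g ω))) :
    ∃ e ∈ D, {ω | ¬Bornology.IsBounded (Set.range fun n ↦ h n ω)}.indicator ξ =ᶠ[l] e := by
  set U : Set α := {ω | ¬BddAbove (Set.range fun n ↦ h n ω)} with hU
  set V : Set α := {ω | ¬BddAbove (Set.range fun n ↦ (-h n) ω)} with hV
  have hUV : {ω | ¬Bornology.IsBounded (Set.range fun n ↦ h n ω)} = U ∪ V := by
    ext ω
    simp only [hU, hV, Set.mem_union, Set.mem_ofPred_eq, isBounded_iff_bddBelow_bddAbove,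
      Pi.neg_apply, ← Set.neg_range, bddAbove_neg]
    tauto
  obtain ⟨e₁, he₁, heq₁⟩ : ∃ e ∈ D, U.indicator ξ =ᶠ[l] e :=
    hcl.exists_indicator_not_bddAbove_eq hD hNA hh hd hf hfg
  obtain ⟨e₂, he₂, heq₂⟩ : ∃ e ∈ D, V.indicator (-ξ) =ᶠ[l] e :=
    hcl.exists_indicator_not_bddAbove_eq hD (by rwa [measurableMultiples_neg])
      (fun n ↦ (hh n).neg) hd (by simpa using hf) hfg
  have hUm : MeasurableSet[G] U := (measurableSet_bddAbove_range hh).compl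
  refine ⟨e₁ - Uᶜ.indicator e₂, D.sub_mem he₁ (hD.indicator_mem hUm.compl he₂), ?_⟩
  rw [hUV]
  filter_upwards [heq₁, heq₂] with ω h₁ h₂
  rw [Pi.sub_apply, ← h₁]
  by_cases hωU : ω ∈ U
  · simp [hωU]
  · by_cases hωV : ω ∈ V <;> simp [hωU, hωV, ← h₂]

/-- Where the coefficients of `ξ` are unbounded, `ξ` agrees with an element of `D`, so these
coefficients can be moved into `D`; the remaining ones converge along a random subsequence. -/
theorem sup_measurableMultiples (hcl : IsDominatedClosed l D) (hD : IsStable G D)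
    (hNA : NoArbitrage l (D ⊔ measurableMultiples G ξ)) :
    IsDominatedClosed l (D ⊔ measurableMultiples G ξ) := by
  intro f g hf hfg
  simp only [mem_sup_measurableMultiples] at hf
  choose x hx hfx using hf
  choose h hh d hd hhd using hx
  have hf n : f n ≤ᶠ[l] h n * ξ + d n := by rw [hhd]; exact hfx n
  set B : Set α := {ω | Bornology.IsBounded (Set.range fun n ↦ h n ω)} with hB
  have hBm : MeasurableSet[G] B := by
    simp only [hB, isBounded_iff_bddBelow_bddAbove]
    exact (measurableSet_bddBelow_range hh).inter (measurableSet_bddAbove_range hh)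
  obtain ⟨e, he, hξe⟩ : ∃ e ∈ D, Bᶜ.indicator ξ =ᶠ[l] e :=
    hcl.exists_indicator_not_isBounded_eq hD hNA hh hd hf hfg
  have hindm n : Measurable[G] (B.indicator (h n)) := (hh n).indicator hBm
  have hind_bdd ω : Bornology.IsBounded (Set.range fun n ↦ B.indicator (h n) ω) := by
    by_cases hω : ω ∈ B
    · have hω' : Bornology.IsBounded (Set.range fun n ↦ h n ω) := hω
      simpa only [Set.indicator_of_mem hω] using hω'
    · simp [hω]
  obtain ⟨τ, a, hτ, ha, hlim⟩ := exists_randomSubsequence_tendsto hindm hind_bdd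
  obtain ⟨e', he', hle⟩ := hcl.exists_mul_le hD (f := f) (h := fun n ↦ B.indicator (h n))
    (d := fun n ↦ Bᶜ.indicator (h n) * e + d n)
    (fun n ↦ D.add_mem (hD.mul_mem ((hh n).indicator hBm.compl) he) (hd n))
    (fun n ↦ by
      filter_upwards [hf n, hξe] with ω hω hωe
      by_cases hωB : ω ∈ B
      · simpa [hωB] using hω
      · simpa [hωB, ← hωe] using hω) hfg hτ
    (b := 1) (b' := 1) (fun _ ↦ measurable_const) (fun _ ↦ zero_le_one)
    (fun _ ↦ tendsto_const_nhds) (by simpa using hlim)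
  rw [one_mul] at hle
  exact ⟨_, mem_sup_measurableMultiples.2 ⟨a, ha, e', he', rfl⟩, hle⟩

/-- Increments are adjoined from the last to the first, so that the space built so far is stable for
the information at the next one. -/
theorem sup_biSup_measurableMultiples {ι β : Type*} [LinearOrder β] {F : β → MeasurableSpace α}
    (hF : Monotone F) (t : ι → β) (ξ : ι → α → ℝ) (S : Finset ι) (hcl : IsDominatedClosed l D)
    (hD : ∀ k ∈ S, IsStable (F (t k)) D)
    (hNA : NoArbitrage l (D ⊔ ⨆ k ∈ S, measurableMultiples (F (t k)) (ξ k))) :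
    IsDominatedClosed l (D ⊔ ⨆ k ∈ S, measurableMultiples (F (t k)) (ξ k)) := by
  classical
  induction S using Finset.induction_on_min_value t with
  | empty => simpa using hcl
  | insert i S _ hmin ih =>
    rw [Finset.iSup_insert, sup_comm (measurableMultiples _ _), ← sup_assoc] at hNA ⊢
    exact (ih (fun k hk ↦ hD k (Finset.mem_insert_of_mem hk))
      (hNA.mono le_sup_left)).sup_measurableMultiples
      ((hD i (Finset.mem_insert_self i S)).sup
        (.biSup fun k hk ↦ .measurableMultiples (hF (hmin k hk)) _)) hNA

theorem sup_of_fg {E : Submodule ℝ (α → ℝ)} (hE : E.FG) (hcl : IsDominatedClosed l D)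
    (hNA : NoArbitrage l (D ⊔ E)) : IsDominatedClosed l (D ⊔ E) := by
  obtain ⟨S, rfl⟩ := hE
  have hspan : Submodule.span ℝ (S : Set (α → ℝ)) = ⨆ ξ ∈ S, measurableMultiples ⊥ ξ := by
    simp_rw [measurableMultiples_bot]
    exact Submodule.span_eq_iSup_of_singleton_spans _
  rw [hspan] at hNA ⊢
  exact hcl.sup_biSup_measurableMultiples (F := fun _ : Unit ↦ ⊥) monotone_const (fun _ ↦ ()) id S
    (fun _ _ ↦ .of_bot D) hNA

end IsDominatedClosed

end DominatedClosed

section Tuples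

variable {I α : Type*} {l : Filter α} {K : I → Submodule ℝ (α → ℝ)}
  {𝒟 𝒴 : Submodule ℝ (I → α → ℝ)}

/-- A space of `I`-tuples of random variables, seen as a space of functions on `I × α`. The matching
notion of "almost everywhere" is `(⊤ : Filter I).curry l`: almost everywhere in each component. -/
def uncurried (𝒟 : Submodule ℝ (I → α → ℝ)) : Submodule ℝ (I × α → ℝ) :=
  𝒟.comap (LinearEquiv.curry ℝ ℝ I α).toLinearMap

theorem mem_uncurried {f : I × α → ℝ} : f ∈ uncurried 𝒟 ↔ (fun i ω ↦ f (i, ω)) ∈ 𝒟 :=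
  Iff.rfl

theorem uncurried_eq_map (𝒟 : Submodule ℝ (I → α → ℝ)) :
    uncurried 𝒟 = 𝒟.map (LinearEquiv.curry ℝ ℝ I α).symm.toLinearMap :=
  Submodule.comap_equiv_eq_map_symm _ _

theorem eventually_top_curry {p : I × α → Prop} :
    (∀ᶠ x in (⊤ : Filter I).curry l, p x) ↔ ∀ i, ∀ᶠ ω in l, p (i, ω) := by
  rw [eventually_curry_iff, eventually_top]

namespace IsDominatedClosed

theorem pi (hK : ∀ i, IsDominatedClosed l (K i)) :
    IsDominatedClosed ((⊤ : Filter I).curry l) (uncurried (Submodule.pi Set.univ K)) := by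
  intro f g hf hfg
  rw [eventually_top_curry] at hfg
  choose x hx hfx using hf
  choose d hd hle using fun i ↦ hK i (fun n ω ↦ f n (i, ω)) (fun ω ↦ g (i, ω))
    (fun n ↦ ⟨_, hx n i trivial, eventually_top_curry.1 (hfx n) i⟩) (hfg i)
  exact ⟨fun x ↦ d x.1 x.2, fun i _ ↦ hd i, eventually_top_curry.2 hle⟩

theorem pi_sup_of_fg [CountableInterFilter l] (hK : ∀ i, IsDominatedClosed l (K i)) (h𝒴 : 𝒴.FG)
    (hNA : NoArbitrage ((⊤ : Filter I).curry l) (uncurried (Submodule.pi Set.univ K ⊔ 𝒴))) :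
    IsDominatedClosed ((⊤ : Filter I).curry l) (uncurried (Submodule.pi Set.univ K ⊔ 𝒴)) := by
  have hsup : uncurried (Submodule.pi Set.univ K ⊔ 𝒴) =
      uncurried (Submodule.pi Set.univ K) ⊔ uncurried 𝒴 := by
    simp only [uncurried_eq_map, Submodule.map_sup]
  rw [hsup] at hNA ⊢
  exact (IsDominatedClosed.pi hK).sup_of_fg (by rw [uncurried_eq_map]; exact h𝒴.map _) hNA

end IsDominatedClosed

end Tuples

section CollectiveArbitrage

variable [MeasurableSpace Ω] {P : Measure Ω} {N : ℕ} {K : Fin N → Submodule ℝ (Ω → ℝ)}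
  {𝒴 : Submodule ℝ (Fin N → Ω → ℝ)}

theorem NCA.noArbitrage (hNCA : NCA P (fun i ↦ K i) 𝒴) (i : Fin N) : NoArbitrage (ae P) (K i) := by
  intro d hd h0
  have hi := hNCA (Pi.single i d) 0 𝒴.zero_mem
    (fun j ↦ by
      rcases eq_or_ne j i with rfl | hj
      · simpa using hd
      · simp [hj])
    (fun j ↦ by
      rcases eq_or_ne j i with rfl | hj
      · filter_upwards [h0] with ω hω
        simpa using hω
      · simp [hj]) i
  filter_upwards [hi] with ω hω
  simpa using hω

theorem NCA.noArbitrage_uncurried (hNCA : NCA P (fun i ↦ K i) 𝒴) :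
    NoArbitrage ((⊤ : Filter (Fin N)).curry (ae P))
      (uncurried (Submodule.pi Set.univ K ⊔ 𝒴)) := by
  intro f hf h0
  obtain ⟨k, hk, y, hy, hky⟩ := Submodule.mem_sup.1 (mem_uncurried.1 hf)
  have hfky i ω : k i ω + y i ω = f (i, ω) := congrFun (congrFun hky i) ω
  refine eventually_top_curry.2 fun i ↦ ?_
  have hzero := hNCA k y hy (fun i ↦ hk i trivial)
    (fun i ↦ by simp only [hfky]; exact eventually_top_curry.1 h0 i) i
  exact hzero.mono fun ω hω ↦ (hfky i ω).symm.trans hω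

theorem IsDominatedClosed.closedAS_KY {FT : Fin N → MeasurableSpace Ω}
    (hcl : IsDominatedClosed ((⊤ : Filter (Fin N)).curry (ae P))
      (uncurried (Submodule.pi Set.univ K ⊔ 𝒴)))
    (hK : ∀ i, ∀ k ∈ K i, Measurable[FT i] k) (h𝒴 : ∀ y ∈ 𝒴, ∀ i, Measurable[FT i] (y i)) :
    ClosedAS P FT (KY P FT (fun i ↦ K i) 𝒴) := by
  intro f g hf hg hfg
  obtain ⟨d, hd, hgd⟩ := hcl (fun n x ↦ f n x.1 x.2) (fun x ↦ g x.1 x.2)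
    (fun n ↦ by
      obtain ⟨k, c, y, hy, hk, hc, hfk⟩ := hf n
      refine ⟨fun x ↦ (k + y) x.1 x.2, Submodule.add_mem_sup (fun i _ ↦ hk i) hy,
        eventually_top_curry.2 fun i ↦ ?_⟩
      filter_upwards [(hc i).2] with ω hω
      simp only [hfk, Pi.add_apply]
      linarith)
    (eventually_top_curry.2 hfg)
  obtain ⟨k, hk, y, hy, hky⟩ := Submodule.mem_sup.1 (mem_uncurried.1 hd)
  have hdky i ω : d (i, ω) = k i ω + y i ω := (congrFun (congrFun hky i) ω).symm
  refine ⟨k, k + y - g, y, hy, fun i ↦ hk i trivial, fun i ↦ ⟨?_, ?_⟩, fun i ↦ ?_⟩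
  · exact ((hK i _ (hk i trivial)).add (h𝒴 y hy i)).sub (hg i)
  · filter_upwards [eventually_top_curry.1 hgd i] with ω hω
    exact sub_nonneg.2 (hω.trans_eq (hdky i ω))
  · ext ω
    simp only [Pi.add_apply, Pi.sub_apply]
    ring

end CollectiveArbitrage

section Gains

variable {J : ℕ} {F : ℕ → MeasurableSpace Ω} {T : ℕ} {A : Finset (Fin J)} {X : Fin J → ℕ → Ω → ℝ}

/-- The gains `gainsSet`, bundled as a vector space: the sum, over assets and trading dates, of the
spaces of gains from a single price increment. -/
def gains (F : ℕ → MeasurableSpace Ω) (T : ℕ) (A : Finset (Fin J)) (X : Fin J → ℕ → Ω → ℝ) :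
    Submodule ℝ (Ω → ℝ) :=
  ⨆ k ∈ A ×ˢ Finset.Icc 1 T, measurableMultiples (F (k.2 - 1)) (X k.1 k.2 - X k.1 (k.2 - 1))

theorem coe_gains : (gains F T A X : Set (Ω → ℝ)) = gainsSet F T A X := by
  ext g
  constructor
  · intro hg
    obtain ⟨m, rfl⟩ := (Submodule.mem_iSup_finset_iff_exists_sum _ _).1 hg
    choose H hH hHm using fun k ↦ mem_measurableMultiples.1 (m k).2
    refine ⟨fun j s ↦ H (j, s), fun j _ s _ _ ↦ hH (j, s), ?_⟩
    ext ω
    simp [← hHm, Finset.sum_product]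
  · rintro ⟨H, hH, rfl⟩
    have hsum : (fun ω ↦ ∑ j ∈ A, ∑ s ∈ Finset.Icc 1 T, H j s ω * (X j s ω - X j (s - 1) ω)) =
        ∑ k ∈ A ×ˢ Finset.Icc 1 T, H k.1 k.2 * (X k.1 k.2 - X k.1 (k.2 - 1)) := by
      ext ω
      simp [Finset.sum_product]
    rw [hsum]
    refine Submodule.sum_mem_biSup fun k hk ↦ ⟨_, ?_, rfl⟩
    obtain ⟨hj, hs⟩ := Finset.mem_product.1 hk
    exact hH _ hj _ (Finset.mem_Icc.1 hs).1 (Finset.mem_Icc.1 hs).2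

theorem measurable_of_mem_gains (hF : Monotone F)
    (hX : ∀ j ∈ A, ∀ t ≤ T, Measurable[F t] (X j t)) {g : Ω → ℝ} (hg : g ∈ gains F T A X) :
    Measurable[F T] g := by
  rw [← SetLike.mem_coe, coe_gains] at hg
  obtain ⟨H, hH, rfl⟩ := hg
  have hXT {j t} (hj : j ∈ A) (ht : t ≤ T) : Measurable[F T] (X j t) :=
    (hX j hj t ht).mono (hF ht) le_rfl
  refine Finset.measurable_sum _ fun j hj ↦ Finset.measurable_sum _ fun s hs ↦ ?_
  obtain ⟨hs, hsT⟩ := Finset.mem_Icc.1 hs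
  have hsT' : s - 1 ≤ T := s.pred_le.trans hsT
  exact ((hH j hj s hs hsT).mono (hF hsT') le_rfl).mul ((hXT hj hsT).sub (hXT hj hsT'))

theorem isDominatedClosed_gains {l : Filter Ω} [CountableInterFilter l] (hF : Monotone F)
    (hNA : NoArbitrage l (gains F T A X)) : IsDominatedClosed l (gains F T A X) := by
  have hclosed := isDominatedClosed_bot.sup_biSup_measurableMultiples (l := l) hF
    (fun k : Fin J × ℕ ↦ k.2 - 1) (fun k ↦ X k.1 k.2 - X k.1 (k.2 - 1)) (A ×ˢ Finset.Icc 1 T)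
    (fun _ _ ↦ .bot _)
  rw [bot_sup_eq] at hclosed
  exact hclosed hNA

end Gains

section Exchanges

variable {N R : ℕ} {Ys : Fin R → Fin N → Ω → ℝ}

/-- The exchanges `spanExch Ys`, bundled as a vector space. -/
def exchanges (Ys : Fin R → Fin N → Ω → ℝ) : Submodule ℝ (Fin N → Ω → ℝ) where
  carrier := spanExch Ys
  zero_mem' := ⟨0, 0, by simp, fun i ↦ by ext; simp⟩
  add_mem' := by
    rintro y y' ⟨x, c, hx, hy⟩ ⟨x', c', hx', hy'⟩
    refine ⟨x + x', c + c', by simp [Finset.sum_add_distrib, hx, hx'], fun i ↦ ?_⟩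
    ext ω
    simp [hy, hy', add_mul, Finset.sum_add_distrib, add_add_add_comm]
  smul_mem' := by
    rintro a y ⟨x, c, hx, hy⟩
    refine ⟨a • x, a • c, by simp [← Finset.mul_sum, hx], fun i ↦ ?_⟩
    ext ω
    simp [hy, mul_add, Finset.mul_sum, mul_assoc]

instance finiteDimensional_exchanges : FiniteDimensional ℝ (exchanges Ys) := by
  have hle : exchanges Ys ≤ Submodule.span ℝ
      (Set.range (fun i : Fin N ↦ Pi.single i (1 : Ω → ℝ)) ∪ Set.range Ys) := by
    rintro y ⟨x, c, -, hy⟩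
    have hsum : y = ∑ i, x i • Pi.single i (1 : Ω → ℝ) + ∑ r, c r • Ys r := by
      ext i ω
      simp [hy, Finset.sum_apply, Pi.single_apply]
    rw [hsum]
    exact add_mem (sum_mem fun i _ ↦ Submodule.smul_mem _ _ (Submodule.subset_span (by simp)))
      (sum_mem fun r _ ↦ Submodule.smul_mem _ _ (Submodule.subset_span (by simp)))
  have := FiniteDimensional.span_of_finite ℝ
    ((Set.finite_range fun i : Fin N ↦ Pi.single i (1 : Ω → ℝ)).union (Set.finite_range Ys))
  exact Submodule.finiteDimensional_of_le hle

theorem measurable_of_mem_exchanges {G : MeasurableSpace Ω} {i : Fin N}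
    (hYs : ∀ r, Measurable[G] (Ys r i)) {y : Fin N → Ω → ℝ} (hy : y ∈ exchanges Ys) :
    Measurable[G] (y i) := by
  obtain ⟨x, c, -, hyx⟩ := hy
  rw [hyx]
  exact measurable_const.add (Finset.measurable_sum _ fun r _ ↦ (hYs r).const_mul (c r))

end Exchanges

theorem KY_closedAS_general [m0 : MeasurableSpace Ω] (P : Measure Ω) {T J N : ℕ}
    (F : Fin N → Filtration ℕ m0) (X : Fin J → ℕ → Ω → ℝ) (assets : Fin N → Finset (Fin J))
    (hadapted : ∀ i, ∀ j ∈ assets i, ∀ t ≤ T, Measurable[F i t] (X j t))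
    (𝒴 : Submodule ℝ (Fin N → Ω → ℝ)) [FiniteDimensional ℝ 𝒴]
    (h𝒴 : ∀ y ∈ 𝒴, ∀ i, Measurable[F i T] (y i))
    (hNCA : NCA P (fun i ↦ gainsSet (F i) T (assets i) X) 𝒴) :
    ClosedAS P (fun i ↦ F i T)
      (KY P (fun i ↦ F i T) (fun i ↦ gainsSet (F i) T (assets i) X) 𝒴) := by
  simp only [← coe_gains] at hNCA ⊢
  have hgains i : IsDominatedClosed (ae P) (gains (F i) T (assets i) X) :=
    isDominatedClosed_gains (F i).mono' (hNCA.noArbitrage i)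
  exact (IsDominatedClosed.pi_sup_of_fg hgains (Module.Finite.iff_fg.1 ‹_›)
    hNCA.noArbitrage_uncurried).closedAS_KY
    (fun i _ ↦ measurable_of_mem_gains (F i).mono' (hadapted i)) h𝒴

/-- closedness of K^𝒴 under a.s. convergence (Theorem THclosure). -/
theorem KY_closedAS
    {Ω : Type*} [m0 : MeasurableSpace Ω]
    (P : Measure Ω) [IsProbabilityMeasure P]
    (T J N : ℕ) (hT : 1 ≤ T) (hJ : 1 ≤ J) (hN : 1 ≤ N)
    (F : Fin N → ℕ → MeasurableSpace Ω)
    (hFmono : ∀ i, Monotone (F i))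
    (hFle : ∀ i t, F i t ≤ m0)
    (hFzero : ∀ i, ∀ A : Set Ω, MeasurableSet[F i 0] A → P A = 0 ∨ P A = 1)
    (X : Fin J → ℕ → Ω → ℝ)
    (assets : Fin N → Finset (Fin J))
    (hassets : ∀ i, (assets i).Nonempty)
    (hcover : ∀ j, ∃ i, j ∈ assets i)
    (hadapted : ∀ i, ∀ j ∈ assets i, ∀ t, t ≤ T → Measurable[F i t] (X j t))
    (R : ℕ) (Ys : Fin R → Fin N → Ω → ℝ)
    (hYsmeas : ∀ r i, Measurable[F i T] (Ys r i))
    (hNCA : NCA P (fun i => gainsSet (F i) T (assets i) X) (spanExch Ys)) :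
    ClosedAS P (fun i => F i T)
      (KY P (fun i => F i T) (fun i => gainsSet (F i) T (assets i) X) (spanExch Ys)) :=
  KY_closedAS_general P (fun i ↦ ⟨F i, hFmono i, hFle i⟩) X assets hadapted (exchanges Ys)
    (fun _ hy i ↦ measurable_of_mem_exchanges (fun r ↦ hYsmeas r i) hy) hNCA

end CollectiveArb
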